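/- For each r = 2, 3, …, n, let 𝒞_r be the event that the subgraph of 𝔾_on(n,K_n,P_n,p_n) induced on a fixed set of r nodes is connected. Then P[𝒞_r] ≤ r^{r−2} · p_e^{r−1}. -/

import Mathlib

open MeasureTheory Filter Asymptotics
open scoped ENNReal

noncomputable section

/-- Key rings: `K`-element subsets of a key pool of size `P`. -/
abbrev KeyRing (P K : ℕ) : Type := {s : Finset (Fin P) // s.card = K}

instance (P K : ℕ) : MeasurableSpace (KeyRing P K) := ⊤

/-- The uniform probability measure on key rings. -/
def uniformKeyMeasure (P K : ℕ) : Measure (KeyRing P K) :=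
  (Fintype.card (KeyRing P K) : ℝ≥0∞)⁻¹ • (Measure.count : Measure (KeyRing P K))

/-- The Bernoulli measure with parameter `p` on `Bool`. -/
def bern (p : ℝ) : Measure Bool :=
  ENNReal.ofReal p • Measure.dirac true + ENNReal.ofReal (1 - p) • Measure.dirac false

/-- Sample space underlying `𝔾_on(n, K, P, p)`: independent key rings for the `n`
nodes together with independent on/off channel states for each pair of nodes. -/
abbrev GonSpace (n K P : ℕ) : Type :=
  (Fin n → KeyRing P K) × (Sym2 (Fin n) → Bool)

/-- The probability measure of the model `𝔾_on(n, K, P, p)`: the key rings of the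
`n` nodes are independent and uniform, and the channels are independent
Bernoulli(`p`) variables, independent of the key rings. -/
def gonMeasure (n K P : ℕ) (p : ℝ) : Measure (GonSpace n K P) :=
  (Measure.pi fun _ : Fin n => uniformKeyMeasure P K).prod
    (Measure.pi fun _ : Sym2 (Fin n) => bern p)

/-- The random graph `𝔾_on`: an edge is present iff the key rings intersect and the
channel between the two nodes is on. -/
def gonGraph {n K P : ℕ} (ω : GonSpace n K P) : SimpleGraph (Fin n) where
  Adj i j := i ≠ j ∧ ((ω.1 i).1 ∩ (ω.1 j).1).Nonempty ∧ ω.2 s(i, j) = true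
  symm := by
    constructor
    rintro i j ⟨h1, h2, h3⟩
    exact ⟨h1.symm, by rwa [Finset.inter_comm], by rwa [Sym2.eq_swap]⟩
  loopless := ⟨fun i h => h.1 rfl⟩

/-- The random key graph `G(n, K, P)`: an edge is present iff the key rings intersect. -/
def rkgGraph {n K P : ℕ} (ω : Fin n → KeyRing P K) : SimpleGraph (Fin n) where
  Adj i j := i ≠ j ∧ ((ω i).1 ∩ (ω j).1).Nonempty
  symm := by
    constructor
    rintro i j ⟨h1, h2⟩
    exact ⟨h1.symm, by rwa [Finset.inter_comm]⟩
  loopless := ⟨fun i h => h.1 rfl⟩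

/-- The probability measure of the random key graph model. -/
def rkgMeasure (n K P : ℕ) : Measure (Fin n → KeyRing P K) :=
  Measure.pi fun _ : Fin n => uniformKeyMeasure P K

/-- Degree of a vertex. -/
def gDeg {V : Type*} (G : SimpleGraph V) (v : V) : ℕ := Nat.card {w // G.Adj v w}

/-- Minimum vertex degree. -/
def minDeg {V : Type*} (G : SimpleGraph V) : ℕ := sInf (Set.range (gDeg G))

/-- A graph is `k`-connected if it remains connected after the removal of any
`k - 1` of its vertices. -/
def KConnected {V : Type*} (G : SimpleGraph V) (k : ℕ) : Prop :=
  ∀ S : Finset V, S.card ≤ k - 1 → (G.induce ((S : Set V)ᶜ)).Connected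

/-- Vertex connectivity: the least number of vertices whose deletion disconnects
the graph. -/
def vertexConn {V : Type*} (G : SimpleGraph V) : ℕ :=
  sInf {m | ∃ S : Finset V, S.card = m ∧ ¬ (G.induce ((S : Set V)ᶜ)).Connected}

/-- `p_s`: the probability that two key rings share at least one key. -/
def psf (K P : ℕ) : ℝ :=
  if 2 * K ≤ P then 1 - (Nat.choose (P - K) K : ℝ) / (Nat.choose P K : ℝ) else 1

/-- `p_e = p · p_s`: the probability of an edge in `𝔾_on`. -/
def pef (K P : ℕ) (p : ℝ) : ℝ := p * psf K P

/-- The event `D_{x,ℓ}` that the node with index `x` has degree exactly `ℓ`. -/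
def degEvent (n K P : ℕ) (x ℓ : ℕ) : Set (GonSpace n K P) :=
  {ω | ∃ hx : x < n, gDeg (gonGraph ω) ⟨x, hx⟩ = ℓ}

/-- The event `E_{xy}` that the edge between the nodes with indices `x`, `y` is present. -/
def edgeEvent (n K P : ℕ) (x y : ℕ) : Set (GonSpace n K P) :=
  {ω | ∃ (hx : x < n) (hy : y < n), (gonGraph ω).Adj ⟨x, hx⟩ ⟨y, hy⟩}

/-- The event that the key rings of nodes `x` and `y` share exactly `u` keys. -/
def interCardEvent (n K P : ℕ) (x y u : ℕ) : Set (GonSpace n K P) :=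
  {ω | ∃ (hx : x < n) (hy : y < n), ((ω.1 ⟨x, hx⟩).1 ∩ (ω.1 ⟨y, hy⟩).1).card = u}

/-- The event `K_{xy}` that the key rings of nodes `x` and `y` share at least one key. -/
def keyShareEvent (n K P : ℕ) (x y : ℕ) : Set (GonSpace n K P) :=
  {ω | ∃ (hx : x < n) (hy : y < n), ((ω.1 ⟨x, hx⟩).1 ∩ (ω.1 ⟨y, hy⟩).1).Nonempty}

/-- `r_n = min(⌊P/K⌋, ⌊n/2⌋)`. -/
def rn (n K P : ℕ) : ℕ := min (P / K) (n / 2)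

/-- The threshold array `J`. -/
def Jarr (n K P : ℕ) (ε lam mu : ℝ) (i : ℕ) : ℕ :=
  if i ≤ rn n K P then max ⌊(1 + ε) * (K : ℝ)⌋₊ ⌊lam * (K : ℝ) * (i : ℝ)⌋₊
  else ⌊mu * (P : ℝ)⌋₊

/-- The event `𝓔(J)`: some set `T` of at least two nodes has a union of key rings of
size at most `J_{|T|}`. -/
def EJ (n K P : ℕ) (ε lam mu : ℝ) : Set (GonSpace n K P) :=
  {ω | ∃ T : Finset (Fin n), 2 ≤ T.card ∧
    (T.biUnion fun i => (ω.1 i).1).card ≤ Jarr n K P ε lam mu T.card}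

/-!
A connected graph on `T` contains a spanning tree, so a union bound over the trees on `T` suffices.
A tree is encoded by its parent function towards a fixed root `a ∈ T`. Cayley's formula for these
functions follows by induction: deleting a root of a forest turns its children into roots.

For one tree, the `r - 1` pairs formed by a vertex and its parent are distinct, so their channels
are all on with probability `p ^ (r - 1)`. The key-sharing events of these pairs are handled by
removing the vertices in order of decreasing depth: a vertex of greatest depth occurs in a single
event, and conditionally on all other key rings that event has probability `p_s`.
-/

section BinomialSum

open scoped Finset

theorem sum_powerset_add_card_mul_pow {ι R : Type*} [CommSemiring R] (c x y : R) (s : Finset ι) :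
    (∑ t ∈ s.powerset, (c + #t) * (x ^ #t * y ^ (#s - #t))) * (x + y) =
      (c * (x + y) + #s * x) * (x + y) ^ #s := by
  classical
  induction s using Finset.induction_on generalizing c with
  | empty => simp
  | insert b s hb ih =>
    have h_without : ∑ t ∈ s.powerset, (c + #t) * (x ^ #t * y ^ (#s + 1 - #t)) =
        (∑ t ∈ s.powerset, (c + #t) * (x ^ #t * y ^ (#s - #t))) * y := by
      rw [Finset.sum_mul]
      refine Finset.sum_congr rfl fun t ht => ?_
      rw [Nat.sub_add_comm (Finset.card_le_card (Finset.mem_powerset.1 ht)), pow_succ]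
      ring
    have h_with : ∑ t ∈ s.powerset,
          (c + #(insert b t)) * (x ^ #(insert b t) * y ^ (#s + 1 - #(insert b t))) =
        (∑ t ∈ s.powerset, (c + 1 + #t) * (x ^ #t * y ^ (#s - #t))) * x := by
      rw [Finset.sum_mul]
      refine Finset.sum_congr rfl fun t ht => ?_
      rw [Finset.card_insert_of_notMem fun h => hb (Finset.mem_powerset.1 ht h),
        Nat.add_sub_add_right]
      push_cast
      ring
    rw [Finset.sum_powerset_insert hb, Finset.card_insert_of_notMem hb, h_without, h_with, add_mul,
      mul_right_comm, mul_right_comm _ x, ih, ih]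
    push_cast
    ring

end BinomialSum

section Forests

open scoped Finset

variable {V : Type*} {A B S T : Finset V} {a : V} {f : V → V}

/-- `f` is the parent function of a forest on `A ∪ B` whose set of roots is `A`. Vertices outside
`B` are their own parents, so that `f` is determined by the forest; acyclicity is expressed by a
depth that decreases from each vertex of `B` to its parent. -/
structure IsForestParent (A B : Finset V) (f : V → V) : Prop where
  apply_of_notMem : ∀ v ∉ B, f v = v
  apply_mem : ∀ v ∈ B, f v ∈ A ∨ f v ∈ B
  exists_depth : ∃ d : V → ℕ, ∀ v ∈ B, d (f v) < d v

theorem isForestParent_empty_right_iff : IsForestParent A ∅ f ↔ f = id :=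
  ⟨fun hf => funext fun v => hf.apply_of_notMem v (Finset.notMem_empty v),
    fun h => ⟨by simp [h], by simp, 0, by simp⟩⟩

theorem not_isForestParent_empty_left (hB : B.Nonempty) : ¬ IsForestParent ∅ B f := fun hf => by
  obtain ⟨d, hd⟩ := hf.exists_depth
  obtain ⟨v, hv, hmin⟩ := B.exists_min_image d hB
  have hfv : f v ∈ B := (hf.apply_mem v hv).resolve_left (Finset.notMem_empty _)
  exact (hd v hv).not_ge (hmin _ hfv)

variable [DecidableEq V]

/-- Deleting the root `a` turns its set `S` of children into roots. -/
theorem IsForestParent.piecewise_id (hf : IsForestParent (insert a A) B f)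
    (hS : {v ∈ B | f v = a} = S) : IsForestParent (A ∪ S) (B \ S) (S.piecewise id f) := by
  obtain ⟨d, hd⟩ := hf.exists_depth
  subst hS
  refine ⟨fun v _ => ?_, fun v _ => ?_, d, fun v _ => ?_⟩
  · have h_fixed := hf.apply_of_notMem v
    grind [Finset.piecewise]
  · have h_parent := hf.apply_mem v
    grind [Finset.piecewise]
  · have h_depth := hd v
    grind [Finset.piecewise]

theorem IsForestParent.piecewise_const (ha : a ∉ A ∪ B) (hS : S ⊆ B)
    (hf : IsForestParent (A ∪ S) (B \ S) f) :
    IsForestParent (insert a A) B (S.piecewise (fun _ => a) f) := by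
  obtain ⟨d, hd⟩ := hf.exists_depth
  refine ⟨fun v _ => ?_, fun v _ => ?_, fun v => if v = a then 0 else d v + 1, fun v _ => ?_⟩
  · have h_fixed := hf.apply_of_notMem v
    grind [Finset.piecewise]
  · have h_parent := hf.apply_mem v
    grind [Finset.piecewise]
  · have h_depth := hd v
    grind [Finset.piecewise]

variable [Fintype V]

open Classical in
/-- The finite set of all `f` with `IsForestParent A B f`: the rooted forests on `A ∪ B` with set
of roots `A`. -/
def forestParents (A B : Finset V) : Finset (V → V) :=
  {f | IsForestParent A B f}

theorem mem_forestParents : f ∈ forestParents A B ↔ IsForestParent A B f := by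
  simp [forestParents]

theorem forestParents_empty_right (A : Finset V) : forestParents A ∅ = {id} := by
  ext f
  simp [mem_forestParents, isForestParent_empty_right_iff]

theorem forestParents_empty_left (hB : B.Nonempty) : forestParents ∅ B = ∅ :=
  Finset.eq_empty_of_forall_notMem fun _ hf =>
    not_isForestParent_empty_left hB (mem_forestParents.1 hf)

theorem card_forestParents_filter_children_eq (ha : a ∉ A ∪ B) (hS : S ⊆ B) :
    #{f ∈ forestParents (insert a A) B | {v ∈ B | f v = a} = S} =
      #(forestParents (A ∪ S) (B \ S)) := by
  refine Finset.card_nbij' (fun f => S.piecewise id f) (fun g => S.piecewise (fun _ => a) g)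
    ?_ ?_ ?_ ?_
  · intro f hf
    obtain ⟨hf, hfS⟩ := Finset.mem_filter.1 hf
    exact mem_forestParents.2 ((mem_forestParents.1 hf).piecewise_id hfS)
  · intro g hg
    have hg := mem_forestParents.1 hg
    refine Finset.mem_filter.2 ⟨mem_forestParents.2 (hg.piecewise_const ha hS), ?_⟩
    ext v
    have h_parent := hg.apply_mem v
    grind [Finset.piecewise]
  · intro f hf
    obtain ⟨-, rfl⟩ := Finset.mem_filter.1 hf
    ext v
    grind [Finset.piecewise]
  · intro g hg
    ext v
    have h_fixed := (mem_forestParents.1 hg).apply_of_notMem v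
    grind [Finset.piecewise]

theorem card_forestParents_insert (ha : a ∉ A ∪ B) :
    #(forestParents (insert a A) B) = ∑ S ∈ B.powerset, #(forestParents (A ∪ S) (B \ S)) := by
  rw [Finset.card_eq_sum_card_fiberwise (f := fun f => {v ∈ B | f v = a}) (t := B.powerset)
    fun f _ => Finset.mem_powerset.2 (Finset.filter_subset _ _)]
  exact Finset.sum_congr rfl fun S hS =>
    card_forestParents_filter_children_eq ha (Finset.mem_powerset.1 hS)

/-- Cayley's formula for rooted forests; the factor `#A + #B` on the left avoids an exponent
`#B - 1`. -/
theorem card_forestParents_mul (hAB : Disjoint A B) :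
    #(forestParents A B) * (#A + #B) = #A * (#A + #B) ^ #B := by
  induction hN : #A + #B generalizing A B with
  | zero => simp_all
  | succ N ih =>
    rcases B.eq_empty_or_nonempty with rfl | hB
    · rw [Finset.card_empty, add_zero] at hN
      simp [forestParents_empty_right, hN]
    rcases A.eq_empty_or_nonempty with rfl | ⟨a, ha⟩
    · simp [forestParents_empty_left hB]
    obtain ⟨A, haA, rfl⟩ : ∃ A', a ∉ A' ∧ insert a A' = A :=
      ⟨A.erase a, Finset.notMem_erase a A, Finset.insert_erase ha⟩
    obtain ⟨haB, hAB⟩ := Finset.disjoint_insert_left.1 hAB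
    rw [Finset.card_insert_of_notMem haA] at hN ⊢
    have hNAB : N = #A + #B := by omega
    have h_recursion : #(forestParents (insert a A) B) * N =
        ∑ S ∈ B.powerset, (#A + #S) * N ^ (#B - #S) := by
      rw [card_forestParents_insert (by simp [haA, haB]), Finset.sum_mul]
      refine Finset.sum_congr rfl fun S hS => ?_
      have hSB := Finset.mem_powerset.1 hS
      have hcard_union : #(A ∪ S) = #A + #S :=
        Finset.card_union_of_disjoint (hAB.mono_right hSB)
      have hcard_sdiff := Finset.card_sdiff_of_subset hSB
      have hcard_le := Finset.card_le_card hSB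
      rw [ih (Finset.disjoint_union_left.2
          ⟨hAB.mono_right Finset.sdiff_subset, Finset.disjoint_sdiff⟩) (by omega),
        hcard_union, hcard_sdiff]
    have h_binomial : (∑ S ∈ B.powerset, (#A + #S) * N ^ (#B - #S)) * (N + 1) =
        (#A * (N + 1) + #B) * (N + 1) ^ #B := by
      simpa [add_comm 1 N] using sum_powerset_add_card_mul_pow #A 1 N B
    have hN_pos : 0 < N := by have := hB.card_pos; omega
    refine Nat.eq_of_mul_eq_mul_right hN_pos ?_
    calc #(forestParents (insert a A) B) * (N + 1) * N
        = #(forestParents (insert a A) B) * N * (N + 1) := mul_right_comm _ _ _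
      _ = (#A * (N + 1) + #B) * (N + 1) ^ #B := by rw [h_recursion, h_binomial]
      _ = (#A + 1) * (N + 1) ^ #B * N := by rw [hNAB]; ring

/-- Cayley's formula: a tree on `T` is encoded by its parent function towards the vertex `a`. -/
theorem card_forestParents_singleton_erase (ha : a ∈ T) :
    #(forestParents {a} (T.erase a)) = #T ^ (#T - 2) := by
  have h := card_forestParents_mul (Finset.disjoint_singleton_left.2 (Finset.notMem_erase a T))
  obtain ⟨k, hk⟩ := Nat.exists_eq_add_one_of_ne_zero (Finset.card_ne_zero_of_mem ha)
  rw [Finset.card_singleton, Finset.card_erase_of_mem ha, hk] at h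
  rw [hk]
  cases k with
  | zero => simpa using h
  | succ k =>
    refine Nat.eq_of_mul_eq_mul_right (Nat.succ_pos (k + 1)) ?_
    rw [add_comm 1, Nat.add_sub_cancel, one_mul, pow_succ] at h
    simpa using h

end Forests

section SpanningTrees

open scoped Finset

theorem exists_adj_dist_lt_of_reachable {V : Type*} {G : SimpleGraph V} {v a : V}
    (h : G.Reachable v a) (hva : v ≠ a) : ∃ w, G.Adj v w ∧ G.dist w a < G.dist v a := by
  obtain ⟨q, hq⟩ := h.exists_walk_length_eq_dist
  cases q with
  | nil => exact absurd rfl hva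
  | cons hadj q =>
    rw [SimpleGraph.Walk.length_cons] at hq
    exact ⟨_, hadj, hq ▸ Nat.lt_succ_of_le (SimpleGraph.dist_le q)⟩

variable {V : Type*} [Fintype V] [DecidableEq V] {T : Finset V} {a : V}

/-- Sending each vertex to a neighbour closer to `a` gives a spanning tree. -/
theorem exists_mem_forestParents_of_induce_connected {G : SimpleGraph V} (ha : a ∈ T)
    (hG : (G.induce (T : Set V)).Connected) :
    ∃ f ∈ forestParents {a} (T.erase a), ∀ v ∈ T.erase a, G.Adj v (f v) := by
  let H := G.induce (T : Set V)
  let root : (T : Set V) := ⟨a, ha⟩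
  have h_parent (x : (T : Set V)) : ∃ y, x ≠ root → H.Adj x y ∧ H.dist y root < H.dist x root := by
    by_cases hx : x = root
    · exact ⟨x, fun h => absurd hx h⟩
    · obtain ⟨y, hy⟩ := exists_adj_dist_lt_of_reachable (hG.preconnected x root) hx
      exact ⟨y, fun _ => hy⟩
  choose parent h_parent using h_parent
  let f (v : V) : V := if h : v ∈ T.erase a then parent ⟨v, Finset.mem_of_mem_erase h⟩ else v
  let d (v : V) : ℕ := if h : v ∈ T then H.dist ⟨v, h⟩ root else 0
  have h_tree (v : V) (hv : v ∈ T.erase a) : G.Adj v (f v) ∧ f v ∈ T ∧ d (f v) < d v := by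
    obtain ⟨hva, hvT⟩ := Finset.mem_erase.1 hv
    obtain ⟨hadj, hdist⟩ := h_parent ⟨v, hvT⟩ fun h => hva (congrArg Subtype.val h)
    have hfT : (parent ⟨v, hvT⟩ : V) ∈ T := (parent ⟨v, hvT⟩).2
    simpa only [f, d, dif_pos hv, dif_pos hvT, dif_pos hfT] using ⟨hadj, hfT, hdist⟩
  refine ⟨f, mem_forestParents.2 ⟨fun v hv => dif_neg hv, fun v hv => ?_, d, ?_⟩, ?_⟩
  · have hfT := (h_tree v hv).2.1
    grind
  · exact fun v hv => (h_tree v hv).2.2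
  · exact fun v hv => (h_tree v hv).1

theorem measure_induce_connected_le {Ω : Type*} [MeasurableSpace Ω] (μ : Measure Ω)
    (G : Ω → SimpleGraph V) (ha : a ∈ T) {q : ℝ≥0∞}
    (hq : ∀ f ∈ forestParents {a} (T.erase a), μ {ω | ∀ v ∈ T.erase a, (G ω).Adj v (f v)} ≤ q) :
    μ {ω | ((G ω).induce (T : Set V)).Connected} ≤ (#T : ℝ≥0∞) ^ (#T - 2) * q := by
  calc μ {ω | ((G ω).induce (T : Set V)).Connected}
      ≤ μ (⋃ f ∈ forestParents {a} (T.erase a), {ω | ∀ v ∈ T.erase a, (G ω).Adj v (f v)}) :=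
        measure_mono fun ω hω => by
          obtain ⟨f, hf, hadj⟩ := exists_mem_forestParents_of_induce_connected ha hω
          exact Set.mem_biUnion hf hadj
    _ ≤ ∑ f ∈ forestParents {a} (T.erase a), μ {ω | ∀ v ∈ T.erase a, (G ω).Adj v (f v)} :=
        measure_biUnion_finset_le _ _
    _ ≤ #(forestParents {a} (T.erase a)) • q := Finset.sum_le_card_nsmul _ _ _ hq
    _ = (#T : ℝ≥0∞) ^ (#T - 2) * q := by
        rw [card_forestParents_singleton_erase ha, nsmul_eq_mul, Nat.cast_pow]

end SpanningTrees

section ProductMeasures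

open scoped Finset

theorem pi_le_mul_of_forall_update_preimage_le {ι : Type*} [Fintype ι] [DecidableEq ι]
    {X : ι → Type*} [∀ i, MeasurableSpace (X i)] (μ : ∀ i, Measure (X i)) [∀ i, SigmaFinite (μ i)]
    {E F : Set (∀ i, X i)} (hE : MeasurableSet E) (hF : MeasurableSet F) (i : ι) (q : ℝ≥0∞)
    (h : ∀ x, μ i (Function.update x i ⁻¹' F) ≤ q * μ i (Function.update x i ⁻¹' E)) :
    Measure.pi μ F ≤ q * Measure.pi μ E := by
  have h_fibre {S : Set (∀ i, X i)} (hS : MeasurableSet S) (x : ∀ i, X i) :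
      ∫⁻ y, S.indicator 1 (Function.update x i y) ∂μ i = μ i (Function.update x i ⁻¹' S) :=
    lintegral_indicator_one (measurable_update x hS)
  have h_meas {S : Set (∀ i, X i)} (hS : MeasurableSet S) :
      Measurable (S.indicator (1 : (∀ i, X i) → ℝ≥0∞)) := measurable_one.indicator hS
  calc Measure.pi μ F = ∫⁻ x, F.indicator 1 x ∂Measure.pi μ := (lintegral_indicator_one hF).symm
    _ ≤ ∫⁻ x, q * E.indicator 1 x ∂Measure.pi μ := by
        refine lintegral_le_of_lmarginal_le {i} (h_meas hF) ((h_meas hE).const_mul q) fun x => ?_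
        simp only [lmarginal_singleton]
        rw [h_fibre hF, lintegral_const_mul _ (by exact (h_meas hE).comp (measurable_update x)),
          h_fibre hE]
        exact h x
    _ = q * Measure.pi μ E := by
        rw [lintegral_const_mul _ (h_meas hE), lintegral_indicator_one hE]

variable {ι R D : Type*} {f : ι → ι} {d : ι → D} {B : Finset ι}

theorem injOn_sym2_mk_parent [Preorder D] (hd : ∀ v ∈ B, d (f v) < d v) :
    Set.InjOn (fun v => s(v, f v)) (B : Set ι) := by
  intro v hv w hw h
  rcases Sym2.eq_iff.1 h with ⟨hvw, -⟩ | ⟨hv_eq, hfv_eq⟩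
  · exact hvw
  · have hwv : d w < d v := hfv_eq ▸ hd v hv
    have hvw : d v < d w := hv_eq ▸ hd w hw
    exact absurd hwv hvw.not_gt

variable [Fintype ι] [MeasurableSpace R] (ν : Measure R) [IsProbabilityMeasure ν]

theorem pi_forall_sym2_parent_mem [Preorder D] (t : Set R) (hd : ∀ v ∈ B, d (f v) < d v) :
    Measure.pi (fun _ : Sym2 ι => ν) {c | ∀ v ∈ B, c s(v, f v) ∈ t} = ν t ^ #B := by
  classical
  have h_box : {c : Sym2 ι → R | ∀ v ∈ B, c s(v, f v) ∈ t} =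
      ((B.image fun v => s(v, f v) : Finset (Sym2 ι)) : Set (Sym2 ι)).pi fun _ => t := by
    ext c
    simp
  rw [h_box, Measure.pi_pi_finset, Finset.prod_const,
    Finset.card_image_of_injOn (injOn_sym2_mk_parent hd)]

/-- A vertex of greatest depth is the parent of no other vertex of `B`, so given all other values
its relation to its parent holds with probability at most `q`. -/
theorem pi_forall_rel_parent_le [LinearOrder D] {rel : R → R → Prop}
    (hrel : MeasurableSet {z : R × R | rel z.1 z.2}) {q : ℝ≥0∞} (hq : ∀ x, ν {y | rel y x} ≤ q)
    (hd : ∀ v ∈ B, d (f v) < d v) :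
    Measure.pi (fun _ : ι => ν) {s | ∀ v ∈ B, rel (s v) (s (f v))} ≤ q ^ #B := by
  classical
  let E (B : Finset ι) : Set (ι → R) := {s | ∀ v ∈ B, rel (s v) (s (f v))}
  have h_meas (B : Finset ι) : MeasurableSet (E B) := by
    have h_inter : E B = ⋂ v ∈ B, (fun s => (s v, s (f v))) ⁻¹' {z : R × R | rel z.1 z.2} := by
      ext s
      simp [E]
    rw [h_inter]
    exact B.measurableSet_biInter fun v _ => hrel.preimage (by fun_prop)
  change Measure.pi (fun _ : ι => ν) (E B) ≤ q ^ #B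
  induction B using Finset.induction_on_max_value d with
  | empty => simp [E]
  | insert v B hvB hmax ih =>
    obtain ⟨hdv, hdB⟩ := (Finset.forall_mem_insert ..).1 hd
    have hfv : f v ≠ v := ne_of_apply_ne d hdv.ne
    have hfB (w : ι) (hw : w ∈ B) : f w ≠ v :=
      ne_of_apply_ne d ((hdB w hw).trans_le (hmax w hw)).ne
    have h_update (s : ι → R) (y : R) : Function.update s v y ∈ E B ↔ s ∈ E B :=
      forall₂_congr fun w hw => by
        rw [Function.update_of_ne (ne_of_mem_of_not_mem hw hvB), Function.update_of_ne (hfB w hw)]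
    have h_update_insert (s : ι → R) (y : R) :
        Function.update s v y ∈ E (insert v B) ↔ rel y (s (f v)) ∧ s ∈ E B := by
      rw [← h_update s y]
      simp [E, Function.update_of_ne hfv]
    have h_step : Measure.pi (fun _ => ν) (E (insert v B)) ≤ q * Measure.pi (fun _ => ν) (E B) := by
      refine pi_le_mul_of_forall_update_preimage_le _ (h_meas B) (h_meas _) v q fun s => ?_
      simp only [Set.preimage, h_update, h_update_insert]
      by_cases hs : s ∈ E B
      · simpa [hs] using hq (s (f v))
      · simp [hs]
    rw [Finset.card_insert_of_notMem hvB, pow_succ']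
    exact h_step.trans (by gcongr; exact ih hdB)

end ProductMeasures

section KeyRings

open scoped Finset

variable {K P : ℕ}

theorem uniformKeyMeasure_eq_card_div_choose (q : Finset (Fin P) → Prop) [DecidablePred q] :
    uniformKeyMeasure P K {s | q s.1} =
      (#{s ∈ Finset.univ.powersetCard K | q s} : ℝ≥0∞) / P.choose K := by
  have h_image : Subtype.val '' {s : KeyRing P K | q s.1} =
      ({s ∈ Finset.univ.powersetCard K | q s} : Finset (Finset (Fin P))) := by
    ext s
    simp [and_comm]
  rw [uniformKeyMeasure, Measure.smul_apply, Measure.count_apply (.of_discrete),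
    ← Subtype.val_injective.encard_image, h_image, Set.encard_coe_eq_coe_finsetCard, smul_eq_mul,
    Fintype.card_finset_len, Fintype.card_fin, mul_comm, ← div_eq_mul_inv, ENat.toENNReal_coe]

theorem isProbabilityMeasure_uniformKeyMeasure (hKP : K ≤ P) :
    IsProbabilityMeasure (uniformKeyMeasure P K) := by
  constructor
  have h_choose : (P.choose K : ℝ≥0∞) ≠ 0 := Nat.cast_ne_zero.2 (Nat.choose_pos hKP).ne'
  simpa [ENNReal.div_self h_choose (ENNReal.natCast_ne_top _)] using
    uniformKeyMeasure_eq_card_div_choose (K := K) fun _ : Finset (Fin P) => True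

theorem uniformKeyMeasure_disjoint (x : KeyRing P K) :
    uniformKeyMeasure P K {y | Disjoint y.1 x.1} =
      ((P - K).choose K : ℝ≥0∞) / P.choose K := by
  have h_filter : {y ∈ (Finset.univ : Finset (Fin P)).powersetCard K | Disjoint y x.1} =
      x.1ᶜ.powersetCard K := by
    ext y
    simp [Finset.mem_powersetCard, Finset.subset_compl_iff_disjoint_right, and_comm]
  rw [uniformKeyMeasure_eq_card_div_choose fun y => Disjoint y x.1, h_filter,
    Finset.card_powersetCard, Finset.card_compl, Fintype.card_fin, x.2]

theorem psf_eq_one_sub_div (K P : ℕ) :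
    psf K P = 1 - ((P - K).choose K : ℝ) / P.choose K := by
  rw [psf]
  split_ifs with h
  · rfl
  · rw [Nat.choose_eq_zero_of_lt (show P - K < K by omega), Nat.cast_zero, zero_div, sub_zero]

theorem psf_nonneg (K P : ℕ) : 0 ≤ psf K P := by
  rw [psf_eq_one_sub_div, sub_nonneg]
  exact div_le_one_of_le₀ (Nat.cast_le.2 (Nat.choose_le_choose K (Nat.sub_le P K)))
    (Nat.cast_nonneg _)

theorem uniformKeyMeasure_inter_nonempty (hKP : K ≤ P) (x : KeyRing P K) :
    uniformKeyMeasure P K {y | (y.1 ∩ x.1).Nonempty} = ENNReal.ofReal (psf K P) := by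
  have := isProbabilityMeasure_uniformKeyMeasure hKP
  have h_compl : {y : KeyRing P K | (y.1 ∩ x.1).Nonempty} = {y | Disjoint y.1 x.1}ᶜ := by
    ext y
    exact Finset.not_disjoint_iff_nonempty_inter.symm
  have h_choose : (0 : ℝ) < P.choose K := Nat.cast_pos.2 (Nat.choose_pos hKP)
  rw [h_compl, prob_compl_eq_one_sub .of_discrete, uniformKeyMeasure_disjoint, psf_eq_one_sub_div,
    ENNReal.ofReal_sub 1 (by positivity), ENNReal.ofReal_one, ENNReal.ofReal_div_of_pos h_choose,
    ENNReal.ofReal_natCast, ENNReal.ofReal_natCast]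

end KeyRings

section Gon

open scoped Finset

variable {n K P : ℕ} {p : ℝ}

theorem bern_singleton_true (p : ℝ) : bern p {true} = ENNReal.ofReal p := by
  simp [bern]

theorem isProbabilityMeasure_bern (hp0 : 0 ≤ p) (hp1 : p ≤ 1) : IsProbabilityMeasure (bern p) := by
  constructor
  simp [bern, ← ENNReal.ofReal_add hp0 (sub_nonneg.2 hp1)]

theorem pef_nonneg (K P : ℕ) (hp0 : 0 ≤ p) : 0 ≤ pef K P p :=
  mul_nonneg hp0 (psf_nonneg K P)

theorem gonMeasure_forall_adj_parent_le {D : Type*} [LinearOrder D] (hKP : K ≤ P) (hp0 : 0 ≤ p)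
    (hp1 : p ≤ 1) {f : Fin n → Fin n} {d : Fin n → D} {B : Finset (Fin n)}
    (hd : ∀ v ∈ B, d (f v) < d v) :
    gonMeasure n K P p {ω | ∀ v ∈ B, (gonGraph ω).Adj v (f v)} ≤
      ENNReal.ofReal (pef K P p) ^ #B := by
  have := isProbabilityMeasure_uniformKeyMeasure hKP
  have := isProbabilityMeasure_bern hp0 hp1
  let keyShare : Set (Fin n → KeyRing P K) := {s | ∀ v ∈ B, ((s v).1 ∩ (s (f v)).1).Nonempty}
  let channelOn : Set (Sym2 (Fin n) → Bool) := {c | ∀ v ∈ B, c s(v, f v) ∈ ({true} : Set Bool)}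
  have h_keyShare :
      Measure.pi (fun _ => uniformKeyMeasure P K) keyShare ≤ ENNReal.ofReal (psf K P) ^ #B :=
    pi_forall_rel_parent_le (rel := fun y x : KeyRing P K => (y.1 ∩ x.1).Nonempty) _ .of_discrete
      (fun x => (uniformKeyMeasure_inter_nonempty hKP x).le) hd
  have h_channelOn : Measure.pi (fun _ => bern p) channelOn = ENNReal.ofReal p ^ #B := by
    rw [pi_forall_sym2_parent_mem _ _ hd, bern_singleton_true]
  calc gonMeasure n K P p {ω | ∀ v ∈ B, (gonGraph ω).Adj v (f v)}
      ≤ gonMeasure n K P p (keyShare ×ˢ channelOn) :=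
        measure_mono fun ω h => ⟨fun v hv => (h v hv).2.1, fun v hv => (h v hv).2.2⟩
    _ = Measure.pi (fun _ => uniformKeyMeasure P K) keyShare *
          Measure.pi (fun _ => bern p) channelOn := Measure.prod_prod _ _
    _ ≤ ENNReal.ofReal (psf K P) ^ #B * ENNReal.ofReal p ^ #B := by
        rw [h_channelOn]
        gcongr
    _ = ENNReal.ofReal (pef K P p) ^ #B := by rw [pef, ENNReal.ofReal_mul hp0, mul_pow, mul_comm]

end Gon

/-- bound on the probability that a fixed set of `r` nodes
induces a connected subgraph of `𝔾_on`. -/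
theorem gon_induced_connected_bound
    (n K P : ℕ) (p : ℝ) (hKP : K ≤ P) (hp0 : 0 < p) (hp1 : p < 1)
    (r : ℕ) (hr2 : 2 ≤ r) (hrn : r ≤ n)
    (T : Finset (Fin n)) (hT : T.card = r) :
    gonMeasure n K P p
        {ω | ((gonGraph ω).induce (T : Set (Fin n))).Connected} ≤
      ENNReal.ofReal ((r : ℝ) ^ (r - 2) * pef K P p ^ (r - 1)) := by
  obtain ⟨a, ha⟩ : T.Nonempty := Finset.card_pos.1 (by omega)
  have h_tree (f : Fin n → Fin n) (hf : f ∈ forestParents {a} (T.erase a)) :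
      gonMeasure n K P p {ω | ∀ v ∈ T.erase a, (gonGraph ω).Adj v (f v)} ≤
        ENNReal.ofReal (pef K P p) ^ (r - 1) := by
    obtain ⟨d, hd⟩ := (mem_forestParents.1 hf).exists_depth
    rw [← hT, ← Finset.card_erase_of_mem ha]
    exact gonMeasure_forall_adj_parent_le hKP hp0.le hp1.le hd
  calc gonMeasure n K P p {ω | ((gonGraph ω).induce (T : Set (Fin n))).Connected}
      ≤ (r : ℝ≥0∞) ^ (r - 2) * ENNReal.ofReal (pef K P p) ^ (r - 1) :=
        hT ▸ measure_induce_connected_le _ gonGraph ha (hT ▸ h_tree)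
    _ = ENNReal.ofReal ((r : ℝ) ^ (r - 2) * pef K P p ^ (r - 1)) := by
        rw [ENNReal.ofReal_mul (by positivity), ENNReal.ofReal_pow (Nat.cast_nonneg r),
          ENNReal.ofReal_pow (pef_nonneg K P hp0.le), ENNReal.ofReal_natCast]
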